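/- Let (X,Σ,μ,T) be an ergodic measure-preserving ℤ^d-system. Then H_ap^c = H_ms; that is, a function f ∈ L²(X,μ) is almost periodic if and only if it is not μ-mean sensitive. -/

import Mathlib

open MeasureTheory Filter Finset Metric
open scoped Classical

noncomputable section

/-- The box `{0,…,n−1}^d` inside `ℤ^d`. -/
def Fbox (d n : ℕ) : Finset (Fin d → ℤ) :=
  Fintype.piFinset fun _ => Finset.Icc (0 : ℤ) ((n : ℤ) - 1)

/-- Upper density of a subset of `ℤ^d` along the boxes `F_n`. -/
def upperDensity (d : ℕ) (S : Set (Fin d → ℤ)) : ℝ :=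
  Filter.limsup
    (fun n : ℕ => (((Fbox d n).filter (fun j => j ∈ S)).card : ℝ) / ((Fbox d n).card : ℝ))
    Filter.atTop

/-- Lower density of a subset of `ℤ^d` along the boxes `F_n`. -/
def lowerDensity (d : ℕ) (S : Set (Fin d → ℤ)) : ℝ :=
  Filter.liminf
    (fun n : ℕ => (((Fbox d n).filter (fun j => j ∈ S)).card : ℝ) / ((Fbox d n).card : ℝ))
    Filter.atTop

variable {X : Type*}

/-- The pseudometric `d_f(x,y) = limsup_n ((1/|F_n|) Σ_{j∈F_n} |f(T^j x) − f(T^j y)|²)^{1/2}`. -/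
def dF {d : ℕ} (T : (Fin d → ℤ) → X → X) (f : X → ℂ) (x y : X) : ℝ :=
  Filter.limsup (fun n : ℕ =>
    Real.sqrt ((∑ j ∈ Fbox d n, ‖f (T j x) - f (T j y)‖ ^ 2) / ((Fbox d n).card : ℝ)))
    Filter.atTop

/-- `x` is a generic point for `|f|²`:
the Birkhoff averages of `|f|²` along `x` converge to `∫ |f|² dμ`. -/
def genericSq {d : ℕ} [MeasurableSpace X] (μ : Measure X) (T : (Fin d → ℤ) → X → X)
    (f : X → ℂ) (x : X) : Prop :=
  Filter.Tendsto
    (fun n : ℕ => (∑ j ∈ Fbox d n, ‖f (T j x)‖ ^ 2) / ((Fbox d n).card : ℝ))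
    Filter.atTop (nhds (∫ y, ‖f y‖ ^ 2 ∂μ))

/-- `ε` is a `μ`-sensitivity constant for `f`: every positive measure set contains two
generic points `x, y` with `d_f(x,y) > ε`. -/
def SensitivityConstant {d : ℕ} [MeasurableSpace X] (μ : Measure X)
    (T : (Fin d → ℤ) → X → X) (f : X → ℂ) (ε : ℝ) : Prop :=
  0 < ε ∧ ∀ A : Set X, MeasurableSet A → 0 < μ A →
    ∃ x ∈ A, ∃ y ∈ A, genericSq μ T f x ∧ genericSq μ T f y ∧ ε < dF T f x y

/-- `f` is `μ`-mean sensitive (`f ∈ H_ms`). -/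
def MeanSensitiveFun {d : ℕ} [MeasurableSpace X] (μ : Measure X)
    (T : (Fin d → ℤ) → X → X) (f : X → ℂ) : Prop :=
  ∃ ε : ℝ, SensitivityConstant μ T f ε

/-- `f` is almost periodic (`f ∈ H_ap`): the closure of the orbit `{f ∘ T^j : j ∈ ℤ^d}`
in `L²(X,μ)` is compact. -/
def APFun {d : ℕ} [MeasurableSpace X] (μ : Measure X)
    (T : (Fin d → ℤ) → X → X) (f : X → ℂ) : Prop :=
  IsCompact (closure {g : Lp ℂ 2 μ | ∃ j : Fin d → ℤ, (g : X → ℂ) =ᵐ[μ] f ∘ T j})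

/-!
By the pointwise ergodic theorem `d_f(T^i x, T^j x) = ‖f ∘ T^i - f ∘ T^j‖₂` for almost every `x`.
If `f` is not mean sensitive, some set `A` of positive measure has small `d_f`-diameter; a maximal
family of almost disjoint translates `T^{-r} A` is finite, and as every `T^{-j} A` meets one of
them, the corresponding `f ∘ T^r` form a net of the orbit.

Conversely, apply the ergodic theorem to `|f(x) - f(y)|²` on the square system. If `f` is mean
sensitive, the limit is bounded below almost everywhere, for otherwise a section of its sublevel set
would be a set of positive measure and small `d_f`-diameter. If `f` is almost periodic, a
self-joining `m ≪ μ ⊗ μ` supported on the squares of finitely many cells makes all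
`∫ |f(T^j x) - f(T^j y)|² dm` small, which contradicts Fatou's lemma.
-/

open scoped ENNReal Topology

section Boxes

variable {d : ℕ}

/-- The translated box `i + {0,…,n−1}^d`, the summation window of the average started at `S i y`. -/
def boxAt (i : Fin d → ℤ) (n : ℕ) : Finset (Fin d → ℤ) :=
  (Fbox d n).map (addRightEmbedding i)

lemma mem_Fbox {n : ℕ} {k : Fin d → ℤ} : k ∈ Fbox d n ↔ ∀ c, 0 ≤ k c ∧ k c < n := by
  simp [Fbox]

lemma card_Fbox (d n : ℕ) : (Fbox d n).card = n ^ d := by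
  simp [Fbox]

lemma mem_boxAt {i k : Fin d → ℤ} {n : ℕ} :
    k ∈ boxAt i n ↔ ∀ c, i c ≤ k c ∧ k c < i c + n := by
  have hk : k ∈ boxAt i n ↔ k - i ∈ Fbox d n := by
    simp [boxAt, ← eq_sub_iff_add_eq]
  simp [hk, mem_Fbox, sub_lt_iff_lt_add']

lemma card_boxAt (i : Fin d → ℤ) (n : ℕ) : (boxAt i n).card = n ^ d := by
  rw [boxAt, card_map, card_Fbox]

lemma sum_boxAt {M : Type*} [AddCommMonoid M] (a : (Fin d → ℤ) → M) (i : Fin d → ℤ) (n : ℕ) :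
    ∑ k ∈ boxAt i n, a k = ∑ k ∈ Fbox d n, a (k + i) := by
  simp [boxAt]

lemma card_le_of_forall_boxAt_inter_nonempty {J : Finset (Fin d → ℤ)} {n : (Fin d → ℤ) → ℕ}
    {b : Fin d → ℤ} (hJ : ∀ i ∈ J, (boxAt i (n i) ∩ boxAt b (n b)).Nonempty)
    (hn : ∀ i ∈ J, n i ≤ 2 * n b) : J.card ≤ 3 ^ d * n b ^ d := by
  have hsub : J ⊆ boxAt (fun c => b c - 2 * n b) (3 * n b) := by
    intro i hi
    obtain ⟨k, hk⟩ := hJ i hi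
    rw [mem_inter, mem_boxAt, mem_boxAt] at hk
    rw [mem_boxAt]
    intro c
    have := hk.1 c
    have := hk.2 c
    have := hn i hi
    omega
  simpa [card_boxAt, mul_pow] using card_le_card hsub

/-- Vitali's covering lemma: some of the boxes are pairwise disjoint, and tripling them covers
all the base points. -/
lemma mul_card_le_sum_biUnion_boxAt (a : (Fin d → ℤ) → ℝ≥0∞) (lam : ℝ≥0∞)
    (n : (Fin d → ℤ) → ℕ) (J : Finset (Fin d → ℤ)) (hn : ∀ i ∈ J, 1 ≤ n i)
    (hJ : ∀ i ∈ J, lam * (n i : ℝ≥0∞) ^ d ≤ ∑ k ∈ boxAt i (n i), a k) :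
    lam * J.card ≤ 3 ^ d * ∑ k ∈ J.biUnion (fun i => boxAt i (n i)), a k := by
  obtain ⟨u, huJ, hdisj, hcover⟩ := Vitali.exists_disjoint_subfamily_covering_enlargement
    (fun i => (boxAt i (n i) : Set (Fin d → ℤ))) J (fun i => (n i : ℝ)) 2 one_lt_two
    (fun i _ => by positivity) (∑ i ∈ J, (n i : ℝ))
    (fun i hi => single_le_sum (f := fun i => (n i : ℝ)) (fun _ _ => by positivity) hi)
    (fun i hi => ⟨i, mem_boxAt.2 fun c => by have := hn i hi; omega⟩)
  lift u to Finset (Fin d → ℤ) using J.finite_toSet.subset huJ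
  have hJu : J ⊆ u.biUnion fun b => {i ∈ J | (boxAt i (n i) ∩ boxAt b (n b)).Nonempty ∧
      n i ≤ 2 * n b} := by
    intro i hi
    obtain ⟨b, hb, hne, hle⟩ := hcover i hi
    simp only [mem_biUnion, mem_filter]
    exact ⟨b, hb, hi, by exact_mod_cast hne, by exact_mod_cast hle⟩
  have hcard : J.card ≤ ∑ b ∈ u, 3 ^ d * n b ^ d := by
    refine (card_le_card hJu).trans (card_biUnion_le.trans (sum_le_sum fun b _ => ?_))
    exact card_le_of_forall_boxAt_inter_nonempty (fun i hi => (mem_filter.1 hi).2.1)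
      fun i hi => (mem_filter.1 hi).2.2
  calc lam * J.card
      ≤ lam * ((∑ b ∈ u, 3 ^ d * n b ^ d : ℕ) : ℝ≥0∞) := by gcongr
    _ = 3 ^ d * ∑ b ∈ u, lam * (n b : ℝ≥0∞) ^ d := by
      push_cast
      simp only [mul_sum]
      exact sum_congr rfl fun b _ => by ring
    _ ≤ 3 ^ d * ∑ b ∈ u, ∑ k ∈ boxAt b (n b), a k := by
      gcongr with b hb
      exact hJ b (huJ hb)
    _ = 3 ^ d * ∑ k ∈ u.biUnion (fun i => boxAt i (n i)), a k := by
      rw [sum_biUnion fun i hi j hj hij => Finset.disjoint_coe.1 (hdisj hi hj hij)]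
    _ ≤ 3 ^ d * ∑ k ∈ J.biUnion (fun i => boxAt i (n i)), a k := by
      gcongr
      exact_mod_cast huJ

lemma mul_card_filter_le_sum_Fbox (a : (Fin d → ℤ) → ℝ≥0∞) (lam : ℝ≥0∞) (N : ℕ) :
    lam * ({i ∈ Fbox d N | ∃ n, 1 ≤ n ∧ n ≤ N ∧
        lam * (n : ℝ≥0∞) ^ d ≤ ∑ k ∈ boxAt i n, a k} : Finset (Fin d → ℤ)).card ≤
      3 ^ d * ∑ k ∈ Fbox d (2 * N), a k := by
  set J : Finset (Fin d → ℤ) := {i ∈ Fbox d N | ∃ n, 1 ≤ n ∧ n ≤ N ∧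
    lam * (n : ℝ≥0∞) ^ d ≤ ∑ k ∈ boxAt i n, a k}
  have hex : ∀ i ∈ J, ∃ n, 1 ≤ n ∧ n ≤ N ∧ lam * (n : ℝ≥0∞) ^ d ≤ ∑ k ∈ boxAt i n, a k :=
    fun i hi => (mem_filter.1 hi).2
  choose! n hn hnN ha using hex
  refine (mul_card_le_sum_biUnion_boxAt a lam n J hn ha).trans ?_
  gcongr
  intro k hk
  obtain ⟨i, hi, hik⟩ := mem_biUnion.1 hk
  have hiN := mem_Fbox.1 (mem_filter.1 hi).1
  have hni := hnN i hi
  rw [mem_boxAt] at hik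
  rw [mem_Fbox]
  intro c
  have := hiN c
  have := hik c
  push_cast
  omega

lemma card_Fbox_inter_boxAt (i : Fin d → ℤ) (n : ℕ) :
    (Fbox d n ∩ boxAt i n).card = ∏ c, (n - (i c).natAbs) := by
  have hinter : Fbox d n ∩ boxAt i n =
      Fintype.piFinset fun c => Finset.Ico (max 0 (i c)) (min n (i c + n)) := by
    ext k
    simp only [mem_inter, mem_Fbox, mem_boxAt, Fintype.mem_piFinset, Finset.mem_Ico,
      ← forall_and]
    exact forall_congr' fun c => by omega
  rw [hinter, Fintype.card_piFinset]
  refine prod_congr rfl fun c _ => ?_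
  rw [Int.card_Ico]
  omega

lemma tendsto_card_Fbox_inter_boxAt_div (i : Fin d → ℤ) :
    Tendsto (fun n : ℕ => ((Fbox d n ∩ boxAt i n).card : ℝ) / (Fbox d n).card) atTop (𝓝 1) := by
  have hfactor : ∀ m : ℕ, Tendsto (fun n : ℕ => ((n - m : ℕ) : ℝ) / n) atTop (𝓝 1) := by
    intro m
    have hlim : Tendsto (fun n : ℕ => 1 - (m : ℝ) / n) atTop (𝓝 1) := by
      simpa using (tendsto_const_div_atTop_nhds_zero_nat (m : ℝ)).const_sub 1
    refine hlim.congr' ?_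
    filter_upwards [eventually_gt_atTop m] with n hn
    have hn0 : (n : ℝ) ≠ 0 := by exact_mod_cast (Nat.zero_le m).trans_lt hn |>.ne'
    rw [Nat.cast_sub hn.le]
    field_simp
  have hprod := tendsto_finsetProd (univ : Finset (Fin d)) fun c _ => hfactor (i c).natAbs
  simpa [card_Fbox_inter_boxAt, card_Fbox, prod_div_distrib] using hprod

lemma abs_sum_sub_sum_le_of_card_eq {ι : Type*} [DecidableEq ι] {s t : Finset ι} {a : ι → ℝ} {C : ℝ}
    (ha : ∀ i, |a i| ≤ C) (hst : s.card = t.card) :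
    |∑ i ∈ s, a i - ∑ i ∈ t, a i| ≤ 2 * C * (t.card - (t ∩ s).card) := by
  have hsdiff : ∀ u v : Finset ι, |∑ i ∈ u \ v, a i| ≤ C * (u.card - (u ∩ v).card) := by
    intro u v
    have hcard : ((u \ v).card : ℝ) = u.card - (u ∩ v).card := by
      rw [eq_sub_iff_add_eq]
      exact_mod_cast card_sdiff_add_card_inter u v
    calc |∑ i ∈ u \ v, a i| ≤ ∑ i ∈ u \ v, |a i| := abs_sum_le_sum_abs _ _
      _ ≤ (u \ v).card • C := sum_le_card_nsmul _ _ _ fun i _ => ha i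
      _ = C * (u.card - (u ∩ v).card) := by rw [nsmul_eq_mul, hcard, mul_comm]
  calc |∑ i ∈ s, a i - ∑ i ∈ t, a i|
      = |∑ i ∈ s \ t, a i - ∑ i ∈ t \ s, a i| := by rw [sum_sdiff_sub_sum_sdiff]
    _ ≤ |∑ i ∈ s \ t, a i| + |∑ i ∈ t \ s, a i| := abs_sub _ _
    _ ≤ C * (s.card - (s ∩ t).card) + C * (t.card - (t ∩ s).card) :=
      add_le_add (hsdiff s t) (hsdiff t s)
    _ = 2 * C * (t.card - (t ∩ s).card) := by rw [hst, inter_comm s t]; ring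

lemma tendsto_sum_Fbox_shift_sub_div {a : (Fin d → ℤ) → ℝ} {C : ℝ} (ha : ∀ k, |a k| ≤ C)
    (i : Fin d → ℤ) :
    Tendsto (fun n : ℕ => (∑ k ∈ Fbox d n, (a (k + i) - a k)) / ((Fbox d n).card : ℝ))
      atTop (𝓝 0) := by
  have hlim : Tendsto (fun n : ℕ =>
      2 * C * (1 - ((Fbox d n ∩ boxAt i n).card : ℝ) / (Fbox d n).card)) atTop (𝓝 0) := by
    simpa using ((tendsto_card_Fbox_inter_boxAt_div i).const_sub 1).const_mul (2 * C)
  refine squeeze_zero_norm' ?_ hlim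
  filter_upwards [eventually_gt_atTop 0] with n hn
  have hcard : (0 : ℝ) < (Fbox d n).card := by rw [card_Fbox]; positivity
  have hbound := abs_sum_sub_sum_le_of_card_eq (s := boxAt i n) (t := Fbox d n) ha
    ((card_boxAt i n).trans (card_Fbox d n).symm)
  rw [sum_sub_distrib, ← sum_boxAt, Real.norm_eq_abs, abs_div, abs_of_pos hcard,
    div_le_iff₀ hcard]
  refine hbound.trans_eq ?_
  field_simp

end Boxes

section Actions

variable {Y : Type*} [MeasurableSpace X] [MeasurableSpace Y]

/-- A measure-preserving action of an additive semigroup. No unit law is imposed, so `S 0` need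
not be the identity. -/
structure IsMeasurePreservingAction {G : Type*} [Add G] (S : G → X → X) (μ : Measure X) :
    Prop where
  measurePreserving : ∀ j, MeasurePreserving (S j) μ μ
  map_add : ∀ i j, S (i + j) = S i ∘ S j

namespace IsMeasurePreservingAction

section Add

variable {G : Type*} [Add G] {S : G → X → X} {μ : Measure X}

lemma measurable (hS : IsMeasurePreservingAction S μ) (j : G) : Measurable (S j) :=
  (hS.measurePreserving j).measurable

lemma apply_apply (hS : IsMeasurePreservingAction S μ) (i j : G) (x : X) :
    S i (S j x) = S (i + j) x := by
  rw [hS.map_add, Function.comp_apply]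

lemma prod [SFinite μ] (hS : IsMeasurePreservingAction S μ) {R : G → Y → Y} {ν : Measure Y}
    [SFinite ν] (hR : IsMeasurePreservingAction R ν) :
    IsMeasurePreservingAction (fun j => Prod.map (S j) (R j)) (μ.prod ν) where
  measurePreserving j := (hS.measurePreserving j).prod (hR.measurePreserving j)
  map_add i j := by rw [hS.map_add, hR.map_add, Prod.map_comp_map]

lemma ae_forall [Countable G] (hS : IsMeasurePreservingAction S μ) {p : X → Prop}
    (hp : ∀ᵐ x ∂μ, p x) : ∀ᵐ x ∂μ, ∀ j, p (S j x) :=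
  ae_all_iff.2 fun j => (hS.measurePreserving j).quasiMeasurePreserving.ae hp

end Add

section AddGroup

variable {G : Type*} [AddGroup G] {S : G → X → X} {μ : Measure X}

lemma forall_apply_eq_iff (hS : IsMeasurePreservingAction S μ) {β : Type*} (v : X → β) (j : G)
    (x : X) : (∀ i, v (S i (S j x)) = v (S 0 (S j x))) ↔ ∀ i, v (S i x) = v (S 0 x) := by
  simp only [hS.apply_apply, zero_add]
  refine ⟨fun h i => ?_, fun h i => (h _).trans (h j).symm⟩
  have hj : ∀ k, v (S k x) = v (S j x) := fun k => by simpa using h (k - j)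
  rw [hj i, hj 0]

end AddGroup

end IsMeasurePreservingAction

/-- The σ-algebra of the measurable sets that every `S j` leaves invariant. -/
abbrev invariantSets {G : Type*} (S : G → X → X) : MeasurableSpace X :=
  ⨅ j, MeasurableSpace.invariants (S j)

lemma measurableSet_invariantSets {G : Type*} [Nonempty G] {S : G → X → X} {A : Set X} :
    MeasurableSet[invariantSets S] A ↔ MeasurableSet A ∧ ∀ j, S j ⁻¹' A = A := by
  simp only [MeasurableSpace.measurableSet_iInf, MeasurableSpace.measurableSet_invariants,
    forall_and, forall_const]

lemma invariantSets_le {G : Type*} [Nonempty G] (S : G → X → X) :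
    invariantSets S ≤ ‹MeasurableSpace X› :=
  fun _ hA => (measurableSet_invariantSets.1 hA).1

lemma apply_eq_of_measurable_invariantSets {G : Type*} {S : G → X → X} {β : Type*}
    [MeasurableSpace β] [MeasurableSingletonClass β] {v : X → β}
    (hv : Measurable[invariantSets S] v) (j : G) (x : X) : v (S j x) = v x :=
  congrFun (MeasurableSpace.comp_eq_of_measurable_invariants
    (hv.mono (iInf_le _ j) le_rfl)) x

lemma measurable_invariantSets {G : Type*} [Nonempty G] {S : G → X → X} {β : Type*}
    [MeasurableSpace β] {v : X → β} (hv : Measurable v) (hinv : ∀ j x, v (S j x) = v x) :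
    Measurable[invariantSets S] v := fun U hU =>
  measurableSet_invariantSets.2 ⟨hv hU, fun j => Set.ext fun x => by simp [hinv j x]⟩

/-- A function invariant up to null sets is replaced by its restriction to the points along whose
orbit it is constant. -/
lemma IsMeasurePreservingAction.aestronglyMeasurable_invariantSets {G : Type*} [AddGroup G]
    [Countable G] {S : G → X → X} {μ : Measure X} (hS : IsMeasurePreservingAction S μ)
    {v : X → ℝ} (hv : AEStronglyMeasurable v μ) (hinv : ∀ j, v ∘ S j =ᵐ[μ] v) :
    AEStronglyMeasurable[invariantSets S] v μ := by
  set w := hv.mk v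
  have hw : Measurable w := hv.stronglyMeasurable_mk.measurable
  have hwv : v =ᵐ[μ] w := hv.ae_eq_mk
  set Z : Set X := {x | ∀ i, w (S i x) = w (S 0 x)} with hZ_def
  have hZ : MeasurableSet Z := by
    rw [hZ_def, Set.ofPred_forall]
    exact MeasurableSet.iInter fun i =>
      measurableSet_eq_fun (hw.comp (hS.measurable i)) (hw.comp (hS.measurable 0))
  have hφ : ∀ j x, Z.indicator (w ∘ S 0) (S j x) = Z.indicator (w ∘ S 0) x := by
    intro j x
    have hjZ : S j x ∈ Z ↔ x ∈ Z := hS.forall_apply_eq_iff w j x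
    by_cases hx : x ∈ Z
    · rw [Set.indicator_of_mem (hjZ.2 hx), Set.indicator_of_mem hx, Function.comp_apply,
        hS.apply_apply, hx, Function.comp_apply]
    · rw [Set.indicator_of_notMem (hjZ.not.2 hx), Set.indicator_of_notMem hx]
  refine ⟨Z.indicator (w ∘ S 0), (measurable_invariantSets
    ((hw.comp (hS.measurable 0)).indicator hZ) hφ).stronglyMeasurable, ?_⟩
  filter_upwards [ae_all_iff.2 hinv, hS.ae_forall hwv] with x hx hxw
  have hvw : ∀ i, w (S i x) = v x := fun i => (hxw i).symm.trans (hx i)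
  rw [Set.indicator_of_mem (show x ∈ Z from fun i => by rw [hvw i, hvw 0]), Function.comp_apply,
    hvw 0]

end Actions

section BoxAverage

variable {d : ℕ}

/-- The average of `g` along the box `F_n` of the orbit of `x`. -/
def boxAverage (S : (Fin d → ℤ) → X → X) (g : X → ℝ) (n : ℕ) (x : X) : ℝ :=
  (∑ j ∈ Fbox d n, g (S j x)) / ((Fbox d n).card : ℝ)

lemma boxAverage_add (S : (Fin d → ℤ) → X → X) (g h : X → ℝ) (n : ℕ) (x : X) :
    boxAverage S (g + h) n x = boxAverage S g n x + boxAverage S h n x := by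
  simp [boxAverage, sum_add_distrib, add_div]

lemma boxAverage_sub (S : (Fin d → ℤ) → X → X) (g h : X → ℝ) (n : ℕ) (x : X) :
    boxAverage S (g - h) n x = boxAverage S g n x - boxAverage S h n x := by
  simp [boxAverage, sum_sub_distrib, sub_div]

lemma boxAverage_const_smul (S : (Fin d → ℤ) → X → X) (c : ℝ) (g : X → ℝ) (n : ℕ) (x : X) :
    boxAverage S (c • g) n x = c * boxAverage S g n x := by
  simp [boxAverage, ← mul_sum, mul_div_assoc]

lemma boxAverage_congr {S : (Fin d → ℤ) → X → X} {g h : X → ℝ} {x : X}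
    (hgh : ∀ j, g (S j x) = h (S j x)) (n : ℕ) : boxAverage S g n x = boxAverage S h n x := by
  simp only [boxAverage, hgh]

lemma card_Fbox_pos (d : ℕ) {n : ℕ} (hn : 1 ≤ n) : 0 < (Fbox d n).card := by
  rw [card_Fbox]
  positivity

lemma boxAverage_eq_of_forall_apply_eq {S : (Fin d → ℤ) → X → X} {g : X → ℝ} {x : X} {c : ℝ}
    (hg : ∀ j, g (S j x) = c) {n : ℕ} (hn : 1 ≤ n) : boxAverage S g n x = c := by
  have hcard := card_Fbox_pos d hn
  simp only [boxAverage, hg, sum_const, nsmul_eq_mul]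
  field_simp

lemma integrable_boxAverage [MeasurableSpace X] {μ : Measure X} {S : (Fin d → ℤ) → X → X}
    {g : X → ℝ} (hg : ∀ j, Integrable (g ∘ S j) μ) (n : ℕ) : Integrable (boxAverage S g n) μ :=
  (integrable_finsetSum _ fun j _ => hg j).div_const _

lemma integral_boxAverage_le [MeasurableSpace X] {μ : Measure X} {S : (Fin d → ℤ) → X → X}
    {g : X → ℝ} (hg : ∀ j, Integrable (g ∘ S j) μ) {C : ℝ} (hC : 0 ≤ C)
    (hgC : ∀ j, ∫ x, g (S j x) ∂μ ≤ C) (n : ℕ) : ∫ x, boxAverage S g n x ∂μ ≤ C := by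
  have hsum := integral_finsetSum (Fbox d n) fun j _ => hg j
  simp only [Function.comp_apply] at hsum
  unfold boxAverage
  rw [integral_div, hsum]
  exact div_le_of_le_mul₀ (Nat.cast_nonneg _) hC (by
    simpa [mul_comm C] using sum_le_card_nsmul (Fbox d n) _ C fun j _ => hgC j)

end BoxAverage

section MaximalInequality

variable {d : ℕ} [MeasurableSpace X] {S : (Fin d → ℤ) → X → X} {μ : Measure X}

/-- Transference: the covering estimate for the boxes is applied along the orbit of `x`. -/
lemma IsMeasurePreservingAction.mul_sum_indicator_le_sum_Fbox
    (hS : IsMeasurePreservingAction S μ) (g : X → ℝ≥0∞) (lam : ℝ≥0∞) (N : ℕ) (x : X) :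
    lam * ∑ i ∈ Fbox d N, {z | ∃ n : ℕ, 1 ≤ n ∧ n ≤ N ∧
        lam * (n : ℝ≥0∞) ^ d ≤ ∑ k ∈ Fbox d n, g (S k z)}.indicator 1 (S i x) ≤
      3 ^ d * ∑ k ∈ Fbox d (2 * N), g (S k x) := by
  have hcover := mul_card_filter_le_sum_Fbox (fun k => g (S k x)) lam N
  simp only [sum_boxAt, ← hS.apply_apply] at hcover
  convert hcover using 2
  rw [card_filter]
  simp [Set.indicator_apply]

lemma IsMeasurePreservingAction.mul_measure_exists_le_le (hS : IsMeasurePreservingAction S μ)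
    {g : X → ℝ≥0∞} (hg : Measurable g) (lam : ℝ≥0∞) (N : ℕ) :
    lam * μ {x | ∃ n : ℕ, 1 ≤ n ∧ n ≤ N ∧ lam * (n : ℝ≥0∞) ^ d ≤ ∑ k ∈ Fbox d n, g (S k x)} ≤
      6 ^ d * ∫⁻ x, g x ∂μ := by
  rcases Nat.eq_zero_or_pos N with rfl | hN
  · simp
  set E := {x | ∃ n : ℕ, 1 ≤ n ∧ n ≤ N ∧ lam * (n : ℝ≥0∞) ^ d ≤ ∑ k ∈ Fbox d n, g (S k x)}
  have hgS : ∀ k, Measurable fun x => g (S k x) := fun k => hg.comp (hS.measurable k)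
  have hE : MeasurableSet E := by
    refine measurableSet_setOfPred.2 (Measurable.exists fun n => measurable_const.and
      (measurable_const.and (measurableSet_setOfPred.1 ?_)))
    exact measurableSet_le measurable_const (Finset.measurable_sum _ fun k _ => hgS k)
  have hES : ∀ i, Measurable fun x => E.indicator (1 : X → ℝ≥0∞) (S i x) := fun i =>
    (measurable_one.indicator hE).comp (hS.measurable i)
  have hleft : ∫⁻ x, lam * ∑ i ∈ Fbox d N, E.indicator 1 (S i x) ∂μ =
      (N : ℝ≥0∞) ^ d * (lam * μ E) := by
    rw [lintegral_const_mul _ (Finset.measurable_sum _ fun i _ => hES i),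
      lintegral_finsetSum _ fun i _ => hES i]
    simp only [fun i => (hS.measurePreserving i).lintegral_comp (measurable_one.indicator hE),
      lintegral_indicator_one hE, sum_const, card_Fbox, nsmul_eq_mul]
    push_cast
    ring
  have hright : ∫⁻ x, 3 ^ d * ∑ k ∈ Fbox d (2 * N), g (S k x) ∂μ =
      (N : ℝ≥0∞) ^ d * (6 ^ d * ∫⁻ x, g x ∂μ) := by
    rw [lintegral_const_mul _ (Finset.measurable_sum _ fun k _ => hgS k),
      lintegral_finsetSum _ fun k _ => hgS k]
    simp only [fun k => (hS.measurePreserving k).lintegral_comp hg, sum_const, card_Fbox,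
      nsmul_eq_mul]
    rw [show (6 : ℝ≥0∞) = 3 * 2 by norm_num, mul_pow (3 : ℝ≥0∞)]
    push_cast
    ring
  have hle := lintegral_mono (μ := μ) (hS.mul_sum_indicator_le_sum_Fbox g lam N)
  rw [hleft, hright] at hle
  exact (ENNReal.mul_le_mul_iff_right (by positivity) (by finiteness)).1 hle

theorem IsMeasurePreservingAction.mul_measure_exists_le (hS : IsMeasurePreservingAction S μ)
    {g : X → ℝ≥0∞} (hg : AEMeasurable g μ) (lam : ℝ≥0∞) :
    lam * μ {x | ∃ n : ℕ, 1 ≤ n ∧ lam * (n : ℝ≥0∞) ^ d ≤ ∑ k ∈ Fbox d n, g (S k x)} ≤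
      6 ^ d * ∫⁻ x, g x ∂μ := by
  set E : ℕ → Set X := fun N => {x | ∃ n : ℕ, 1 ≤ n ∧ n ≤ N ∧
    lam * (n : ℝ≥0∞) ^ d ≤ ∑ k ∈ Fbox d n, hg.mk g (S k x)}
  have hmono : Monotone E := fun N M hNM x ⟨n, h1, hn, hle⟩ => ⟨n, h1, hn.trans hNM, hle⟩
  have hsub : {x | ∃ n : ℕ, 1 ≤ n ∧ lam * (n : ℝ≥0∞) ^ d ≤ ∑ k ∈ Fbox d n, g (S k x)} ≤ᵐ[μ]
      ⋃ N, E N := by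
    filter_upwards [hS.ae_forall hg.ae_eq_mk] with x hx ⟨n, h1, hle⟩
    simp only [hx] at hle
    exact Set.mem_iUnion.2 ⟨n, n, h1, le_rfl, hle⟩
  calc lam * μ {x | ∃ n : ℕ, 1 ≤ n ∧ lam * (n : ℝ≥0∞) ^ d ≤ ∑ k ∈ Fbox d n, g (S k x)}
      ≤ lam * μ (⋃ N, E N) := by gcongr 1; exact measure_mono_ae hsub
    _ = ⨆ N, lam * μ (E N) := by rw [hmono.measure_iUnion, ENNReal.mul_iSup]
    _ ≤ 6 ^ d * ∫⁻ x, hg.mk g x ∂μ :=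
      iSup_le fun N => hS.mul_measure_exists_le_le hg.measurable_mk lam N
    _ = 6 ^ d * ∫⁻ x, g x ∂μ := by rw [lintegral_congr_ae hg.ae_eq_mk]

end MaximalInequality

section BanachPrinciple

variable {d : ℕ} {S : (Fin d → ℤ) → X → X}

lemma enorm_boxAverage_mul_le (S : (Fin d → ℤ) → X → X) (g : X → ℝ) {n : ℕ} (hn : 1 ≤ n) (x : X) :
    ‖boxAverage S g n x‖ₑ * (n : ℝ≥0∞) ^ d ≤ ∑ k ∈ Fbox d n, ‖g (S k x)‖ₑ := by
  have hcard : ((Fbox d n).card : ℝ) ≠ 0 := by exact_mod_cast (card_Fbox_pos d hn).ne'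
  have hcard_enorm : (n : ℝ≥0∞) ^ d = ‖((Fbox d n).card : ℝ)‖ₑ := by simp [card_Fbox]
  rw [hcard_enorm, ← enorm_mul, boxAverage, div_mul_cancel₀ _ hcard]
  exact enorm_sum_le _ _

variable [MeasurableSpace X] {μ : Measure X}

lemma IsMeasurePreservingAction.mul_measure_not_eventually_abs_boxAverage_le
    (hS : IsMeasurePreservingAction S μ) {f c : X → ℝ} (hf : AEStronglyMeasurable f μ)
    (hc : AEStronglyMeasurable c μ)
    (hlim : ∀ᵐ x ∂μ, Tendsto (fun n => boxAverage S c n x) atTop (𝓝 0)) {η : ℝ} (hη : 0 < η) :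
    ENNReal.ofReal (η / 2) * μ {x | ¬ ∀ᶠ n in atTop, |boxAverage S f n x| ≤ η} ≤
      6 ^ d * eLpNorm (f - c) 1 μ := by
  rw [eLpNorm_one_eq_lintegral_enorm]
  refine le_trans ?_ (hS.mul_measure_exists_le (hf.sub hc).enorm (ENNReal.ofReal (η / 2)))
  gcongr 1
  refine measure_mono_ae ?_
  filter_upwards [hlim] with x hx hbad
  by_contra hsmall
  refine hbad ?_
  have hc_small : ∀ᶠ n in atTop, |boxAverage S c n x| < η / 2 := by
    simpa using hx.abs.eventually_lt_const (show |(0 : ℝ)| < η / 2 by simpa using hη)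
  filter_upwards [hc_small, eventually_ge_atTop 1] with n hcn hn
  have hr : |boxAverage S (f - c) n x| < η / 2 := by
    have hlt := (enorm_boxAverage_mul_le S (f - c) hn x).trans_lt
      (not_le.1 fun hle => hsmall ⟨n, hn, hle⟩)
    rw [← Real.norm_eq_abs, ← ENNReal.ofReal_lt_ofReal_iff (by positivity), ofReal_norm]
    exact lt_of_mul_lt_mul_right' hlt
  rw [boxAverage_sub] at hr
  rw [abs_lt] at hr hcn
  exact abs_le.2 ⟨by linarith, by linarith⟩

/-- Banach's principle: by the maximal inequality, almost everywhere convergence of the averages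
passes to `L¹` limits. -/
theorem IsMeasurePreservingAction.ae_tendsto_boxAverage_zero_of_approx
    (hS : IsMeasurePreservingAction S μ) {f : X → ℝ} (hf : AEStronglyMeasurable f μ)
    (happrox : ∀ δ : ℝ≥0∞, δ ≠ 0 → ∃ c, AEStronglyMeasurable c μ ∧ eLpNorm (f - c) 1 μ ≤ δ ∧
      ∀ᵐ x ∂μ, Tendsto (fun n => boxAverage S c n x) atTop (𝓝 0)) :
    ∀ᵐ x ∂μ, Tendsto (fun n => boxAverage S f n x) atTop (𝓝 0) := by
  have hnull : ∀ η > 0, ∀ᵐ x ∂μ, ∀ᶠ n in atTop, |boxAverage S f n x| ≤ η := by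
    intro η hη
    have hzero : ENNReal.ofReal (η / 2) *
        μ {x | ¬ ∀ᶠ n in atTop, |boxAverage S f n x| ≤ η} = 0 := by
      refine nonpos_iff_eq_zero.1 (ENNReal.le_of_forall_pos_le_add fun ε hε _ => ?_)
      obtain ⟨c, hc, hfc, hlim⟩ := happrox (ε / 6 ^ d)
        (ENNReal.div_pos (by exact_mod_cast hε.ne') (by finiteness)).ne'
      calc _ ≤ 6 ^ d * eLpNorm (f - c) 1 μ :=
            hS.mul_measure_not_eventually_abs_boxAverage_le hf hc hlim hη
        _ ≤ 6 ^ d * (ε / 6 ^ d) := by gcongr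
        _ = 0 + ε := by rw [ENNReal.mul_div_cancel (by positivity) (by finiteness), zero_add]
    exact (mul_eq_zero.1 hzero).resolve_left (by simpa using hη)
  filter_upwards [ae_all_iff.2 fun m : ℕ => hnull (1 / (m + 1)) (by positivity)] with x hx
  rw [Metric.tendsto_nhds]
  intro ε hε
  obtain ⟨m, hm⟩ := exists_nat_one_div_lt hε
  filter_upwards [hx m] with n hn
  rw [dist_zero_right, Real.norm_eq_abs]
  exact hn.trans_lt hm

end BanachPrinciple

section SquareIntegrable

lemma integral_mul_eq_zero_of_condExp_ae_eq_zero {m m₀ : MeasurableSpace X} {μ : Measure[m₀] X}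
    (hm : m ≤ m₀) [SigmaFinite (μ.trim hm)] {u v : X → ℝ}
    (huv : Integrable (v * u) μ) (hu : Integrable u μ) (hv : AEStronglyMeasurable[m] v μ)
    (hcond : μ[u | m] =ᵐ[μ] 0) : ∫ x, v x * u x ∂μ = 0 := by
  have hpull : μ[v * u | m] =ᵐ[μ] 0 := by
    filter_upwards [condExp_mul_of_aestronglyMeasurable_left hv huv hu, hcond] with x hx h0
    rw [hx, Pi.mul_apply, h0, Pi.zero_apply, mul_zero]
  calc ∫ x, v x * u x ∂μ = ∫ x, (μ[v * u | m]) x ∂μ := (integral_condExp hm).symm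
    _ = 0 := integral_eq_zero_of_ae hpull

variable [MeasurableSpace X] {μ : Measure X}

lemma IsMeasurePreservingAction.aestronglyMeasurable_invariantSets_of_inner_eq_zero {G : Type*}
    [AddGroup G] [Countable G] {S : G → X → X} (hS : IsMeasurePreservingAction S μ)
    {v : Lp ℝ 2 μ} (hv : ∀ j (w : Lp ℝ 2 μ),
      inner ℝ v (Lp.compMeasurePreserving (S j) (hS.measurePreserving j) w - w) = 0) :
    AEStronglyMeasurable[invariantSets S] v μ := by
  refine hS.aestronglyMeasurable_invariantSets (Lp.aestronglyMeasurable v) fun j => ?_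
  have hfix : Lp.compMeasurePreserving (S j) (hS.measurePreserving j) v = v := by
    refine eq_of_norm_le_re_inner_eq_norm_sq (𝕜 := ℝ)
      (Lp.norm_compMeasurePreserving v (hS.measurePreserving j)).le ?_
    have hinner := hv j v
    rw [inner_sub_right, sub_eq_zero, real_inner_self_eq_norm_sq] at hinner
    simpa [real_inner_comm] using hinner
  have hcoe := Lp.coeFn_compMeasurePreserving v (hS.measurePreserving j)
  rw [hfix] at hcoe
  exact hcoe.symm

variable {d : ℕ} {S : (Fin d → ℤ) → X → X}

lemma IsMeasurePreservingAction.tendsto_boxAverage_comp_sub_self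
    (hS : IsMeasurePreservingAction S μ) {s : X → ℝ} {C : ℝ} (hs : ∀ x, |s x| ≤ C)
    (i : Fin d → ℤ) (x : X) :
    Tendsto (fun n => boxAverage S (s ∘ S i - s) n x) atTop (𝓝 0) := by
  simpa [boxAverage, hS.apply_apply, add_comm i] using
    tendsto_sum_Fbox_shift_sub_div (a := fun k => s (S k x)) (fun k => hs _) i

/-- The square-integrable functions whose box averages tend to `0` almost everywhere. -/
def IsMeasurePreservingAction.nullAverages (hS : IsMeasurePreservingAction S μ) :
    Submodule ℝ (Lp ℝ 2 μ) where
  carrier := {u | ∀ᵐ x ∂μ, Tendsto (fun n => boxAverage S u n x) atTop (𝓝 0)}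
  add_mem' {u v} hu hv := by
    filter_upwards [hu, hv, hS.ae_forall (Lp.coeFn_add u v)] with x hux hvx hadd
    simpa only [boxAverage_congr hadd, boxAverage_add, add_zero] using hux.add hvx
  zero_mem' := by
    filter_upwards [hS.ae_forall (Lp.coeFn_zero ℝ 2 μ)] with x hx
    simp only [boxAverage_congr hx]
    simp [boxAverage]
  smul_mem' c u hu := by
    filter_upwards [hu, hS.ae_forall (Lp.coeFn_smul c u)] with x hux hsmul
    simpa only [boxAverage_congr hsmul, boxAverage_const_smul, mul_zero] using hux.const_mul c

lemma IsMeasurePreservingAction.compMeasurePreserving_sub_self_mem_nullAverages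
    (hS : IsMeasurePreservingAction S μ) (s : Lp.simpleFunc ℝ 2 μ) (i : Fin d → ℤ) :
    Lp.compMeasurePreserving (S i) (hS.measurePreserving i) (s : Lp ℝ 2 μ) - s ∈
      hS.nullAverages := by
  set t := Lp.simpleFunc.toSimpleFunc s
  have hst : t =ᵐ[μ] (s : Lp ℝ 2 μ) := Lp.simpleFunc.toSimpleFunc_eq_toFun s
  have hcob : (Lp.compMeasurePreserving (S i) (hS.measurePreserving i) (s : Lp ℝ 2 μ) : X → ℝ) -
      ((s : Lp ℝ 2 μ) : X → ℝ) =ᵐ[μ] (t : X → ℝ) ∘ S i - t := by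
    filter_upwards [Lp.coeFn_compMeasurePreserving (s : Lp ℝ 2 μ) (hS.measurePreserving i), hst,
      hS.ae_forall hst] with x hcomp hx hxi
    rw [Pi.sub_apply, hcomp, Pi.sub_apply, Function.comp_apply, Function.comp_apply, hx, hxi i]
  obtain ⟨C, hC⟩ := t.exists_forall_norm_le
  filter_upwards [hS.ae_forall ((Lp.coeFn_sub _ _).trans hcob)] with x hx
  simpa only [boxAverage_congr hx] using hS.tendsto_boxAverage_comp_sub_self hC i x

lemma IsMeasurePreservingAction.inner_compMeasurePreserving_sub_self_eq_zero
    (hS : IsMeasurePreservingAction S μ) {v : Lp ℝ 2 μ} (hv : v ∈ hS.nullAveragesᗮ)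
    (i : Fin d → ℤ) (w : Lp ℝ 2 μ) :
    inner ℝ v (Lp.compMeasurePreserving (S i) (hS.measurePreserving i) w - w) = 0 := by
  refine (Lp.simpleFunc.denseRange (by finiteness)).induction_on w (isClosed_eq ?_
    continuous_const) fun s => Submodule.inner_left_of_mem_orthogonal
      (hS.compMeasurePreserving_sub_self_mem_nullAverages s i) hv
  exact continuous_const.inner
    ((Lp.isometry_compMeasurePreserving (hS.measurePreserving i)).continuous.sub continuous_id)

lemma IsMeasurePreservingAction.toLp_mem_topologicalClosure_nullAverages [IsFiniteMeasure μ]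
    (hS : IsMeasurePreservingAction S μ) {u : X → ℝ} (hu : MemLp u 2 μ)
    (hcond : μ[u | invariantSets S] =ᵐ[μ] 0) :
    hu.toLp u ∈ hS.nullAverages.topologicalClosure := by
  rw [← Submodule.orthogonal_orthogonal_eq_closure, Submodule.mem_orthogonal]
  intro v hv
  have hv_inv := hS.aestronglyMeasurable_invariantSets_of_inner_eq_zero
    (hS.inner_compMeasurePreserving_sub_self_eq_zero hv)
  rw [L2.inner_def, ← integral_mul_eq_zero_of_condExp_ae_eq_zero (invariantSets_le S)
    ((Lp.memLp v).integrable_mul hu) (hu.integrable one_le_two) hv_inv hcond]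
  refine integral_congr_ae ?_
  filter_upwards [hu.coeFn_toLp] with x hx
  rw [hx, real_inner_comm]
  rfl

lemma IsMeasurePreservingAction.ae_tendsto_boxAverage_zero_of_memLp_two [IsProbabilityMeasure μ]
    (hS : IsMeasurePreservingAction S μ) {u : X → ℝ} (hu : MemLp u 2 μ)
    (hcond : μ[u | invariantSets S] =ᵐ[μ] 0) :
    ∀ᵐ x ∂μ, Tendsto (fun n => boxAverage S u n x) atTop (𝓝 0) := by
  refine hS.ae_tendsto_boxAverage_zero_of_approx hu.1 fun δ hδ => ?_
  have hmem : hu.toLp u ∈ closure (hS.nullAverages : Set (Lp ℝ 2 μ)) :=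
    hS.toLp_mem_topologicalClosure_nullAverages hu hcond
  obtain ⟨w, hw, hdist⟩ := EMetric.mem_closure_iff.1 hmem δ (pos_iff_ne_zero.2 hδ)
  have hae := Lp.aestronglyMeasurable w
  refine ⟨w, hae, ?_, hw⟩
  calc eLpNorm (u - (w : X → ℝ)) 1 μ ≤ eLpNorm (u - (w : X → ℝ)) 2 μ :=
        eLpNorm_le_eLpNorm_of_exponent_le one_le_two (hu.1.sub hae)
    _ = edist (hu.toLp u) w := by
        rw [Lp.edist_def]
        exact eLpNorm_congr_ae (hu.coeFn_toLp.symm.sub .rfl)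
    _ ≤ δ := hdist.le

end SquareIntegrable

section PointwiseErgodicTheorem

lemma condExp_sub_condExp_ae_eq_zero {m m₀ : MeasurableSpace X} {μ : Measure[m₀] X}
    (hm : m ≤ m₀) [SigmaFinite (μ.trim hm)] {f : X → ℝ} (hf : Integrable f μ) :
    μ[f - μ[f | m] | m] =ᵐ[μ] 0 := by
  filter_upwards [condExp_sub hf integrable_condExp m] with x hx
  rw [hx, condExp_of_stronglyMeasurable hm stronglyMeasurable_condExp integrable_condExp, sub_self]

lemma condExp_ae_eq_integral_of_forall_measurableSet {m m₀ : MeasurableSpace X}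
    {μ : Measure[m₀] X} [IsProbabilityMeasure μ] (hm : m ≤ m₀)
    (htriv : ∀ A, MeasurableSet[m] A → μ A = 0 ∨ μ A = 1) (f : X → ℝ) :
    μ[f | m] =ᵐ[μ] fun _ => ∫ x, f x ∂μ := by
  obtain ⟨c, hc⟩ : ∃ c, μ[f | m] =ᵐ[μ] Function.const X c := by
    refine exists_eventuallyEq_const_of_forall_separating MeasurableSet fun U hU => ?_
    have hpre : MeasurableSet[m] (μ[f | m] ⁻¹' U) := stronglyMeasurable_condExp.measurable hU
    rcases htriv _ hpre with h0 | h1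
    · exact Or.inr (measure_eq_zero_iff_ae_notMem.1 h0)
    · exact Or.inl ((prob_compl_eq_zero_iff (hm _ hpre)).2 h1)
  have hint : ∫ x, f x ∂μ = c := by
    rw [← integral_condExp hm, integral_congr_ae hc]
    simp
  rw [hint]
  exact hc

variable {d : ℕ} [MeasurableSpace X] {μ : Measure X} [IsProbabilityMeasure μ]
  {S : (Fin d → ℤ) → X → X}

lemma IsMeasurePreservingAction.ae_tendsto_boxAverage_zero (hS : IsMeasurePreservingAction S μ)
    {f : X → ℝ} (hf : Integrable f μ) (hcond : μ[f | invariantSets S] =ᵐ[μ] 0) :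
    ∀ᵐ x ∂μ, Tendsto (fun n => boxAverage S f n x) atTop (𝓝 0) := by
  refine hS.ae_tendsto_boxAverage_zero_of_approx hf.1 fun δ hδ => ?_
  obtain ⟨s, hfs, hs⟩ : ∃ s : X → ℝ, eLpNorm (f - s) 1 μ < δ / 2 ∧ MemLp s 2 μ := by
    obtain ⟨s, hfs, -⟩ := (memLp_one_iff_integrable.2 hf).exists_simpleFunc_eLpNorm_sub_lt
      ENNReal.one_ne_top (ENNReal.half_pos hδ).ne'
    exact ⟨s, hfs, s.memLp_of_isFiniteMeasure 2 μ⟩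
  have hs_int : Integrable s μ := hs.integrable one_le_two
  have hc : MemLp (s - μ[s | invariantSets S]) 2 μ := hs.sub (hs.condExp one_le_two)
  refine ⟨s - μ[s | invariantSets S], hc.1, ?_, hS.ae_tendsto_boxAverage_zero_of_memLp_two hc
    (condExp_sub_condExp_ae_eq_zero (invariantSets_le S) hs_int)⟩
  have hsplit : f - (s - μ[s | invariantSets S]) =ᵐ[μ]
      (f - s) - μ[f - s | invariantSets S] := by
    filter_upwards [condExp_sub hf hs_int (invariantSets S), hcond] with x hx h0
    simp only [Pi.sub_apply, hx, h0, Pi.zero_apply]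
    ring
  have hfs_meas : AEStronglyMeasurable (f - s) μ := (hf.sub hs_int).1
  calc eLpNorm (f - (s - μ[s | invariantSets S])) 1 μ
      = eLpNorm ((f - s) - μ[f - s | invariantSets S]) 1 μ := eLpNorm_congr_ae hsplit
    _ ≤ eLpNorm (f - s) 1 μ + eLpNorm (μ[f - s | invariantSets S]) 1 μ :=
      eLpNorm_sub_le hfs_meas integrable_condExp.1 le_rfl
    _ ≤ δ / 2 + δ / 2 := add_le_add hfs.le ((eLpNorm_condExp_le_eLpNorm _ le_rfl).trans hfs.le)
    _ = δ := ENNReal.add_halves δ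

theorem IsMeasurePreservingAction.ae_tendsto_boxAverage_condExp
    (hS : IsMeasurePreservingAction S μ) {f : X → ℝ} (hf : Integrable f μ) :
    ∀ᵐ x ∂μ, Tendsto (fun n => boxAverage S f n x) atTop (𝓝 ((μ[f | invariantSets S]) x)) := by
  filter_upwards [hS.ae_tendsto_boxAverage_zero (hf.sub integrable_condExp)
    (condExp_sub_condExp_ae_eq_zero (invariantSets_le S) hf)] with x hx
  have hinv : ∀ j, (μ[f | invariantSets S]) (S j x) = (μ[f | invariantSets S]) x := fun j =>
    apply_eq_of_measurable_invariantSets stronglyMeasurable_condExp.measurable j x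
  refine (zero_add ((μ[f | invariantSets S]) x) ▸ hx.add_const _).congr' ?_
  filter_upwards [eventually_ge_atTop 1] with n hn
  rw [boxAverage_sub, boxAverage_eq_of_forall_apply_eq hinv hn, sub_add_cancel]

theorem IsMeasurePreservingAction.ae_tendsto_boxAverage_integral
    (hS : IsMeasurePreservingAction S μ)
    (herg : ∀ A : Set X, MeasurableSet A → (∀ j, S j ⁻¹' A = A) → μ A = 0 ∨ μ A = 1)
    {f : X → ℝ} (hf : Integrable f μ) :
    ∀ᵐ x ∂μ, Tendsto (fun n => boxAverage S f n x) atTop (𝓝 (∫ y, f y ∂μ)) := by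
  have hconst := condExp_ae_eq_integral_of_forall_measurableSet (μ := μ) (invariantSets_le S)
    (fun A hA => have hA' := measurableSet_invariantSets.1 hA; herg A hA'.1 hA'.2) f
  filter_upwards [hS.ae_tendsto_boxAverage_condExp hf, hconst] with x hx hc
  rwa [hc] at hx

end PointwiseErgodicTheorem

section AlmostPeriodic

lemma exists_finset_forall_exists_not_aedisjoint [MeasurableSpace X] {μ : Measure X}
    [IsFiniteMeasure μ] {ι : Type*} {B : ι → Set X} (hB : ∀ i, NullMeasurableSet (B i) μ)
    {c : ℝ≥0∞} (hc : 0 < c) (hcB : ∀ i, c ≤ μ (B i)) :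
    ∃ R : Finset ι, ∀ j, ∃ r ∈ R, ¬ AEDisjoint μ (B r) (B j) := by
  by_contra! hdisj
  have : Std.Symm fun i j => AEDisjoint μ (B i) (B j) := ⟨fun _ _ h => h.symm⟩
  obtain ⟨u, -, hu⟩ := exists_seq_of_forall_finset_exists' (fun _ => True)
    (fun i j => AEDisjoint μ (B i) (B j))
    fun R _ => (hdisj R).imp fun _ hj => ⟨trivial, hj⟩
  refine Set.infinite_univ (α := ℕ) ?_
  simpa [hcB] using Measure.finite_const_le_meas_of_disjoint_iUnion₀ μ hc (fun n => hB (u n)) hu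
    (measure_ne_top μ _)

lemma toReal_eLpNorm_two_eq_sqrt_integral [MeasurableSpace X] {μ : Measure X} {E : Type*}
    [NormedAddCommGroup E] {f : X → E} (hf : MemLp f 2 μ) :
    (eLpNorm f 2 μ).toReal = √(∫ x, ‖f x‖ ^ 2 ∂μ) := by
  rw [hf.eLpNorm_eq_integral_rpow_norm two_ne_zero ENNReal.ofNat_ne_top,
    ENNReal.toReal_ofReal (by positivity), Real.sqrt_eq_rpow]
  simp

variable {d : ℕ} {T : (Fin d → ℤ) → X → X} {f : X → ℂ}

variable [MeasurableSpace X] {μ : Measure X}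

lemma IsMeasurePreservingAction.dF_apply_apply_eq (hT : IsMeasurePreservingAction T μ)
    (i j : Fin d → ℤ) (x : X) :
    dF T f (T i x) (T j x) =
      limsup (fun n => √(boxAverage T (fun z => ‖f (T i z) - f (T j z)‖ ^ 2) n x)) atTop := by
  simp only [dF, boxAverage, hT.apply_apply, add_comm i, add_comm j]

variable [IsProbabilityMeasure μ]

lemma IsMeasurePreservingAction.ae_genericSq (hT : IsMeasurePreservingAction T μ)
    (herg : ∀ A : Set X, MeasurableSet A → (∀ j, T j ⁻¹' A = A) → μ A = 0 ∨ μ A = 1)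
    (hf : MemLp f 2 μ) : ∀ᵐ x ∂μ, genericSq μ T f x :=
  hT.ae_tendsto_boxAverage_integral herg ((memLp_two_iff_integrable_sq_norm hf.1).1 hf)

lemma IsMeasurePreservingAction.ae_dF_apply_apply_eq_dist (hT : IsMeasurePreservingAction T μ)
    (herg : ∀ A : Set X, MeasurableSet A → (∀ j, T j ⁻¹' A = A) → μ A = 0 ∨ μ A = 1)
    {u : (Fin d → ℤ) → Lp ℂ 2 μ} (hu : ∀ j, u j =ᵐ[μ] f ∘ T j) :
    ∀ᵐ x ∂μ, ∀ i j, dF T f (T i x) (T j x) = dist (u i) (u j) := by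
  have hf : ∀ j, MemLp (f ∘ T j) 2 μ := fun j => (memLp_congr_ae (hu j)).1 (Lp.memLp (u j))
  refine ae_all_iff.2 fun i => ae_all_iff.2 fun j => ?_
  have hsub := (hf i).sub (hf j)
  filter_upwards [hT.ae_tendsto_boxAverage_integral herg
    ((memLp_two_iff_integrable_sq_norm hsub.1).1 hsub)] with x hx
  have hu_toLp : ∀ k, u k = (hf k).toLp (f ∘ T k) := fun k =>
    Lp.ext ((hu k).trans (hf k).coeFn_toLp.symm)
  rw [hT.dF_apply_apply_eq, hu_toLp i, hu_toLp j, dist_eq_norm, ← MemLp.toLp_sub, Lp.norm_toLp,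
    toReal_eLpNorm_two_eq_sqrt_integral hsub]
  exact hx.sqrt.limsup_eq

/-- A positive-measure set `A` of small `d_f`-diameter turns the finitely many translates
`T_r⁻¹ A`, `r ∈ R`, meeting all others into a net of the orbit of `f`. -/
theorem IsMeasurePreservingAction.apFun_of_not_meanSensitiveFun
    (hT : IsMeasurePreservingAction T μ)
    (herg : ∀ A : Set X, MeasurableSet A → (∀ j, T j ⁻¹' A = A) → μ A = 0 ∨ μ A = 1)
    (hf : MemLp f 2 μ) (hns : ¬ MeanSensitiveFun μ T f) : APFun μ T f := by
  refine isCompact_iff_totallyBounded_isComplete.2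
    ⟨(Metric.totallyBounded_iff.2 fun ε hε => ?_).closure, isClosed_closure.isComplete⟩
  have hfT : ∀ j, MemLp (f ∘ T j) 2 μ := fun j =>
    hf.comp_measurePreserving (hT.measurePreserving j)
  set u : (Fin d → ℤ) → Lp ℂ 2 μ := fun j => (hfT j).toLp (f ∘ T j)
  have hu : ∀ j, u j =ᵐ[μ] f ∘ T j := fun j => (hfT j).coeFn_toLp
  obtain ⟨A, hA, hApos, hAε⟩ : ∃ A, MeasurableSet A ∧ 0 < μ A ∧ ∀ x ∈ A, ∀ y ∈ A,
      genericSq μ T f x → genericSq μ T f y → dF T f x y ≤ ε / 2 := by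
    by_contra! hsens
    exact hns ⟨ε / 2, half_pos hε, hsens⟩
  have hAT : ∀ j, μ (T j ⁻¹' A) = μ A := fun j =>
    (hT.measurePreserving j).measure_preimage hA.nullMeasurableSet
  obtain ⟨R, hR⟩ := exists_finset_forall_exists_not_aedisjoint
    (fun j => (hT.measurable j hA).nullMeasurableSet) hApos fun j => (hAT j).ge
  refine ⟨u '' R, R.finite_toSet.image u, ?_⟩
  rintro g ⟨j, hgj⟩
  obtain ⟨r, hr, hrj⟩ := hR j
  obtain ⟨x, ⟨hxr, hxj⟩, hgen, hdist⟩ := ((frequently_ae_mem_iff.2 hrj).and_eventually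
    ((hT.ae_forall (hT.ae_genericSq herg hf)).and (hT.ae_dF_apply_apply_eq_dist herg hu))).exists
  refine Set.mem_biUnion (Set.mem_image_of_mem u hr) ?_
  rw [Metric.mem_ball, Lp.ext (hgj.trans (hu j).symm), ← hdist]
  exact (hAε _ hxj _ hxr (hgen j) (hgen r)).trans_lt (half_lt_self hε)

end AlmostPeriodic

section FiberwiseProduct

variable [MeasurableSpace X] {ι : Type*}

/-- The relatively independent self-joining of `μ` over the partition into the fibres of `κ`: the
sum of the product measures on the squares of the fibres, each divided by the mass of its fibre, so
that both marginals are `μ`. A null fibre has weight `∞` but contributes the zero measure. -/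
def fiberwiseProd (κ : SimpleFunc X ι) (μ : Measure X) : Measure (X × X) :=
  ∑ v ∈ κ.range, (μ (κ ⁻¹' {v}))⁻¹ • (μ.restrict (κ ⁻¹' {v})).prod (μ.restrict (κ ⁻¹' {v}))

lemma sum_restrict_preimage_singleton (κ : SimpleFunc X ι) (μ : Measure X) :
    ∑ v ∈ κ.range, μ.restrict (κ ⁻¹' {v}) = μ := by
  ext A hA
  calc (∑ v ∈ κ.range, μ.restrict (κ ⁻¹' {v})) A
      = ∑ v ∈ κ.range, μ.restrict A (κ ⁻¹' {v}) := by
        simp only [Measure.finsetSum_apply, Measure.restrict_apply hA,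
          Measure.restrict_apply (κ.measurableSet_fiber _), Set.inter_comm]
    _ = μ A := by
        rw [SimpleFunc.sum_measure_preimage_singleton, SimpleFunc.coe_range,
          Set.preimage_range, Measure.restrict_apply_univ]

lemma map_fst_inv_smul_prod_self (μ : Measure X) [IsFiniteMeasure μ] :
    ((μ Set.univ)⁻¹ • μ.prod μ).map Prod.fst = μ := by
  rcases eq_zero_or_neZero μ with rfl | h
  · simp
  · rw [Measure.map_smul, Measure.map_fst_prod, smul_smul,
      ENNReal.inv_mul_cancel (NeZero.ne _) (measure_ne_top _ _), one_smul]

lemma map_snd_inv_smul_prod_self (μ : Measure X) [IsFiniteMeasure μ] :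
    ((μ Set.univ)⁻¹ • μ.prod μ).map Prod.snd = μ := by
  rw [Measure.map_smul, ← Measure.prod_swap, Measure.map_map measurable_snd measurable_swap,
    ← Measure.map_smul]
  exact map_fst_inv_smul_prod_self μ

variable (κ : SimpleFunc X ι) (μ : Measure X)

lemma measurePreserving_fst_fiberwiseProd [IsFiniteMeasure μ] :
    MeasurePreserving Prod.fst (fiberwiseProd κ μ) μ := by
  refine ⟨measurable_fst, ?_⟩
  rw [fiberwiseProd, Measure.map_finset_sum measurable_fst.aemeasurable]
  refine (sum_congr rfl fun v _ => ?_).trans (sum_restrict_preimage_singleton κ μ)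
  rw [← Measure.restrict_apply_univ, map_fst_inv_smul_prod_self]

lemma measurePreserving_snd_fiberwiseProd [IsFiniteMeasure μ] :
    MeasurePreserving Prod.snd (fiberwiseProd κ μ) μ := by
  refine ⟨measurable_snd, ?_⟩
  rw [fiberwiseProd, Measure.map_finset_sum measurable_snd.aemeasurable]
  refine (sum_congr rfl fun v _ => ?_).trans (sum_restrict_preimage_singleton κ μ)
  rw [← Measure.restrict_apply_univ, map_snd_inv_smul_prod_self]

lemma fiberwiseProd_absolutelyContinuous [SFinite μ] : fiberwiseProd κ μ ≪ μ.prod μ := by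
  refine Measure.AbsolutelyContinuous.mk fun A _ hA => ?_
  simp only [fiberwiseProd, Measure.finsetSum_apply, Measure.smul_apply, smul_eq_mul,
    Measure.prod_restrict, Measure.absolutelyContinuous_of_le Measure.restrict_le_self hA,
    mul_zero, sum_const_zero]

lemma ae_fiberwiseProd_apply_eq [SFinite μ] : ∀ᵐ p ∂fiberwiseProd κ μ, κ p.1 = κ p.2 := by
  refine ae_finsetSum_measure_iff.2 fun v _ => Measure.ae_smul_measure ?_ _
  have hv := κ.measurableSet_fiber v
  rw [Measure.prod_restrict]
  filter_upwards [ae_restrict_mem (hv.prod hv)] with p hp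
  exact hp.1.trans hp.2.symm

lemma exists_simpleFunc_forall_apply_eq {β : Type*} {t : Set (SimpleFunc X β)} (ht : t.Finite) :
    ∃ κ : SimpleFunc X (t → β), ∀ s ∈ t, ∀ x y, κ x = κ y → s x = s y := by
  have : Finite t := ht
  refine ⟨⟨fun x s => s.1 x, fun v => ?_, ?_⟩, fun s hs x y hxy => congrFun hxy ⟨s, hs⟩⟩
  · have hfiber : (fun (x : X) (s : t) => s.1 x) ⁻¹' {v} = ⋂ s : t, s.1 ⁻¹' {v s} := by
      ext x
      simp [funext_iff]
    rw [hfiber]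
    exact MeasurableSet.iInter fun s => s.1.measurableSet_fiber (v s)
  · exact (Set.Finite.pi' fun s : t => s.1.finite_range).subset
      (Set.range_subset_iff.2 fun x s => Set.mem_range_self x)

end FiberwiseProduct

section SqDist

/-- The diagonal action on `X × X`. -/
abbrev diagonalAction {G : Type*} (T : G → X → X) (j : G) : X × X → X × X :=
  Prod.map (T j) (T j)

/-- The function `|f(x) − f(y)|²` on `X × X`; the limit superior of its averages under the diagonal
action is `d_f²`. -/
def sqDist {E : Type*} [NormedAddCommGroup E] (f : X → E) (p : X × X) : ℝ :=
  ‖f p.1 - f p.2‖ ^ 2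

variable {E : Type*} [NormedAddCommGroup E] {f s : X → E}

lemma sqDist_le_two_mul_add (f : X → E) (x y z : X) :
    sqDist f (y, z) ≤ 2 * sqDist f (x, y) + 2 * sqDist f (x, z) := by
  have htri : ‖f y - f z‖ ≤ ‖f x - f y‖ + ‖f x - f z‖ := by
    rw [norm_sub_rev (f x) (f y)]
    exact norm_sub_le_norm_sub_add_norm_sub _ _ _
  calc ‖f y - f z‖ ^ 2 ≤ (‖f x - f y‖ + ‖f x - f z‖) ^ 2 := by gcongr
    _ ≤ 2 * ‖f x - f y‖ ^ 2 + 2 * ‖f x - f z‖ ^ 2 := by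
      rw [← mul_add]
      exact add_sq_le

lemma sqDist_comp_diagonalAction {G : Type*} (T : G → X → X) (f : X → E) (j : G) :
    sqDist f ∘ diagonalAction T j = sqDist (f ∘ T j) :=
  rfl

variable [MeasurableSpace X] {μ : Measure X} {m : Measure (X × X)}

lemma integrable_sqDist (hfst : MeasurePreserving Prod.fst m μ)
    (hsnd : MeasurePreserving Prod.snd m μ) (hf : MemLp f 2 μ) : Integrable (sqDist f) m := by
  have hdiff := (hf.comp_measurePreserving hfst).sub (hf.comp_measurePreserving hsnd)
  exact (memLp_two_iff_integrable_sq_norm hdiff.1).1 hdiff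

lemma integral_sqDist_le (hfst : MeasurePreserving Prod.fst m μ)
    (hsnd : MeasurePreserving Prod.snd m μ) (hf : MemLp f 2 μ) (hs : MemLp s 2 μ)
    (hms : ∀ᵐ p ∂m, s p.1 = s p.2) {δ : ℝ≥0∞} (hδ : δ ≠ ∞) (hfs : eLpNorm (f - s) 2 μ ≤ δ) :
    ∫ p, sqDist f p ∂m ≤ (2 * δ.toReal) ^ 2 := by
  have hdiff := (hf.comp_measurePreserving hfst).sub (hf.comp_measurePreserving hsnd)
  have hfs_meas : AEStronglyMeasurable (f - s) μ := (hf.sub hs).1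
  have hsplit : f ∘ Prod.fst - f ∘ Prod.snd =ᵐ[m] (f - s) ∘ Prod.fst - (f - s) ∘ Prod.snd := by
    filter_upwards [hms] with p hp
    simp [hp]
  have hnorm : eLpNorm (f ∘ Prod.fst - f ∘ Prod.snd) 2 m ≤ 2 * δ :=
    calc eLpNorm (f ∘ Prod.fst - f ∘ Prod.snd) 2 m
        = eLpNorm ((f - s) ∘ Prod.fst - (f - s) ∘ Prod.snd) 2 m := eLpNorm_congr_ae hsplit
      _ ≤ eLpNorm ((f - s) ∘ Prod.fst) 2 m + eLpNorm ((f - s) ∘ Prod.snd) 2 m :=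
        eLpNorm_sub_le (hfs_meas.comp_measurePreserving hfst)
          (hfs_meas.comp_measurePreserving hsnd) one_le_two
      _ = 2 * eLpNorm (f - s) 2 μ := by
        rw [eLpNorm_comp_measurePreserving hfs_meas hfst,
          eLpNorm_comp_measurePreserving hfs_meas hsnd, two_mul]
      _ ≤ 2 * δ := by gcongr
  have hsqrt : √(∫ p, sqDist f p ∂m) ≤ 2 * δ.toReal :=
    calc √(∫ p, sqDist f p ∂m)
        = (eLpNorm (f ∘ Prod.fst - f ∘ Prod.snd) 2 m).toReal :=
          (toReal_eLpNorm_two_eq_sqrt_integral hdiff).symm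
      _ ≤ (2 * δ).toReal :=
          ENNReal.toReal_mono (ENNReal.mul_ne_top ENNReal.ofNat_ne_top hδ) hnorm
      _ = 2 * δ.toReal := by rw [ENNReal.toReal_mul, ENNReal.toReal_ofNat]
  exact (Real.sqrt_le_left (by positivity)).1 hsqrt

end SqDist

section Sensitivity

lemma le_of_ae_tendsto_of_integral_le [MeasurableSpace X] {μ : Measure X} [IsProbabilityMeasure μ]
    {F : ℕ → X → ℝ} {L : X → ℝ} {c C : ℝ} (hF : ∀ n, Integrable (F n) μ) (hF₀ : ∀ n x, 0 ≤ F n x)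
    (hL : ∀ᵐ x ∂μ, Tendsto (fun n => F n x) atTop (𝓝 (L x))) (hc : ∀ᵐ x ∂μ, c ≤ L x)
    (hC : ∀ n, ∫ x, F n x ∂μ ≤ C) : c ≤ C := by
  refine (ENNReal.ofReal_le_ofReal_iff ((integral_nonneg (hF₀ 0)).trans (hC 0))).1 ?_
  calc ENNReal.ofReal c
      = ∫⁻ _, ENNReal.ofReal c ∂μ := by simp
    _ ≤ ∫⁻ x, liminf (fun n => ENNReal.ofReal (F n x)) atTop ∂μ := by
      refine lintegral_mono_ae ?_
      filter_upwards [hL, hc] with x hx hcx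
      rw [(ENNReal.tendsto_ofReal hx).liminf_eq]
      exact ENNReal.ofReal_le_ofReal hcx
    _ ≤ liminf (fun n => ∫⁻ x, ENNReal.ofReal (F n x) ∂μ) atTop :=
      lintegral_liminf_le' fun n => (hF n).aemeasurable.ennreal_ofReal
    _ ≤ liminf (fun _ : ℕ => ENNReal.ofReal C) atTop := by
      refine liminf_le_liminf (Eventually.of_forall fun n => ?_)
      rw [← ofReal_integral_eq_lintegral_ofReal (hF n) (Eventually.of_forall (hF₀ n))]
      exact ENNReal.ofReal_le_ofReal (hC n)
    _ = ENNReal.ofReal C := by simp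

variable {d : ℕ} {T : (Fin d → ℤ) → X → X} {f : X → ℂ} {ε : ℝ}

lemma boxAverage_sqDist_le (T : (Fin d → ℤ) → X → X) (f : X → ℂ) (n : ℕ) (x y z : X) :
    boxAverage (diagonalAction T) (sqDist f) n (y, z) ≤
      2 * boxAverage (diagonalAction T) (sqDist f) n (x, y) +
        2 * boxAverage (diagonalAction T) (sqDist f) n (x, z) := by
  simp only [boxAverage, ← mul_div_assoc, ← add_div, mul_sum, ← sum_add_distrib]
  gcongr
  exact sqDist_le_two_mul_add f _ _ _

lemma dF_le_of_eventually_boxAverage_le (hε : 0 ≤ ε) {x y z : X}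
    (hy : ∀ᶠ n in atTop, boxAverage (diagonalAction T) (sqDist f) n (x, y) ≤ ε ^ 2 / 4)
    (hz : ∀ᶠ n in atTop, boxAverage (diagonalAction T) (sqDist f) n (x, z) ≤ ε ^ 2 / 4) :
    dF T f y z ≤ ε := by
  refine limsup_le_of_le (isCoboundedUnder_le_of_le atTop (x := 0) fun n => Real.sqrt_nonneg _) ?_
  filter_upwards [hy, hz] with n hny hnz
  rw [Real.sqrt_le_left hε]
  calc boxAverage (diagonalAction T) (sqDist f) n (y, z)
      ≤ 2 * boxAverage (diagonalAction T) (sqDist f) n (x, y) +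
        2 * boxAverage (diagonalAction T) (sqDist f) n (x, z) := boxAverage_sqDist_le T f n x y z
    _ ≤ ε ^ 2 := by linarith

variable [MeasurableSpace X] {μ : Measure X}

lemma SensitivityConstant.measure_eq_zero (hs : SensitivityConstant μ T f ε) {A : Set X}
    (hA : NullMeasurableSet A μ) (hAε : ∀ y ∈ A, ∀ z ∈ A, dF T f y z ≤ ε) : μ A = 0 := by
  obtain ⟨B, hBA, hB, hBA'⟩ := hA.exists_measurable_subset_ae_eq
  by_contra hpos
  rw [← measure_congr hBA'] at hpos
  obtain ⟨y, hy, z, hz, -, -, hlt⟩ := hs.2 B hB (pos_iff_ne_zero.2 hpos)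
  exact hlt.not_ge (hAε y (hBA hy) z (hBA hz))

lemma APFun.exists_finite_simpleFunc (hap : APFun μ T f) (hT : IsMeasurePreservingAction T μ)
    (hf : MemLp f 2 μ) {δ : ℝ} (hδ : 0 < δ) :
    ∃ t : Set (SimpleFunc X ℂ), t.Finite ∧ ∀ j, ∃ s ∈ t,
      eLpNorm (f ∘ T j - ⇑s) 2 μ ≤ ENNReal.ofReal δ := by
  obtain ⟨t, ht, horbit⟩ := Metric.totallyBounded_iff.1
    (hap.totallyBounded.subset subset_closure) (δ / 2) (half_pos hδ)
  choose s hus using fun u : Lp ℂ 2 μ =>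
    (Lp.memLp u).exists_simpleFunc_eLpNorm_sub_lt ENNReal.ofNat_ne_top
      (ENNReal.ofReal_pos.2 (half_pos hδ)).ne'
  refine ⟨s '' t, ht.image s, fun j => ?_⟩
  have hfT : MemLp (f ∘ T j) 2 μ := hf.comp_measurePreserving (hT.measurePreserving j)
  obtain ⟨u, hut, hu⟩ := Set.mem_iUnion₂.1 (horbit ⟨j, hfT.coeFn_toLp⟩)
  have hfu : eLpNorm (f ∘ T j - ⇑u) 2 μ ≤ ENNReal.ofReal (δ / 2) := by
    rw [← eLpNorm_congr_ae (hfT.coeFn_toLp.sub EventuallyEq.rfl), ← Lp.edist_def, edist_dist]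
    exact ENNReal.ofReal_le_ofReal hu.le
  refine ⟨s u, Set.mem_image_of_mem s hut, ?_⟩
  calc eLpNorm (f ∘ T j - ⇑(s u)) 2 μ
      = eLpNorm ((f ∘ T j - ⇑u) + (⇑u - ⇑(s u))) 2 μ := by rw [sub_add_sub_cancel]
    _ ≤ eLpNorm (f ∘ T j - ⇑u) 2 μ + eLpNorm (⇑u - ⇑(s u)) 2 μ :=
      eLpNorm_add_le (hfT.1.sub (Lp.aestronglyMeasurable u))
        ((Lp.aestronglyMeasurable u).sub (s u).aestronglyMeasurable) one_le_two
    _ ≤ ENNReal.ofReal (δ / 2) + ENNReal.ofReal (δ / 2) := add_le_add hfu (hus u).1.le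
    _ = ENNReal.ofReal δ := by
      rw [← ENNReal.ofReal_add (half_pos hδ).le (half_pos hδ).le, add_halves]

variable [IsProbabilityMeasure μ]

/-- For almost every `x`, two points `y` and `z` with small limits at `(x, y)` and `(x, z)` are
`d_f`-close, so such points form a null set. -/
theorem SensitivityConstant.ae_le_condExp (hs : SensitivityConstant μ T f ε)
    (hT : IsMeasurePreservingAction T μ) (hf : MemLp f 2 μ) :
    ∀ᵐ p ∂μ.prod μ, ε ^ 2 / 4 ≤
      ((μ.prod μ)[sqDist f | invariantSets (diagonalAction T)]) p := by
  set L := (μ.prod μ)[sqDist f | invariantSets (diagonalAction T)]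
  have hL : Measurable L :=
    (stronglyMeasurable_condExp.mono (invariantSets_le (diagonalAction T))).measurable
  have hconv := (hT.prod hT).ae_tendsto_boxAverage_condExp
    (integrable_sqDist measurePreserving_fst measurePreserving_snd hf)
  rw [Measure.ae_prod_iff_ae_ae (measurableSet_le measurable_const hL)]
  filter_upwards [Measure.ae_ae_of_ae_prod hconv] with x hx
  have hmeas : MeasurableSet {y | L (x, y) < ε ^ 2 / 4} :=
    measurableSet_lt (hL.comp measurable_prodMk_left) measurable_const
  have hnull := hs.measure_eq_zero
    (hmeas.nullMeasurableSet.inter (NullMeasurableSet.of_compl (NullMeasurableSet.of_null hx)))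
    fun y hy z hz => dF_le_of_eventually_boxAverage_le hs.1.le
      ((hy.2.eventually_lt_const hy.1).mono fun _ => le_of_lt)
      ((hz.2.eventually_lt_const hz.1).mono fun _ => le_of_lt)
  filter_upwards [hx, measure_eq_zero_iff_ae_notMem.1 hnull] with y hy hyL
  exact not_lt.1 fun hlt => hyL ⟨hlt, hy⟩

/-- The self-joining over the cells on which finitely many simple functions approximating the orbit
of `f` are all constant. -/
lemma APFun.exists_integral_sqDist_le (hap : APFun μ T f) (hT : IsMeasurePreservingAction T μ)
    (hf : MemLp f 2 μ) {δ : ℝ} (hδ : 0 < δ) :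
    ∃ m : Measure (X × X), IsProbabilityMeasure m ∧ m ≪ μ.prod μ ∧
      ∀ j, Integrable (sqDist (f ∘ T j)) m ∧ ∫ p, sqDist (f ∘ T j) p ∂m ≤ (2 * δ) ^ 2 := by
  obtain ⟨t, ht, happrox⟩ := hap.exists_finite_simpleFunc hT hf hδ
  obtain ⟨κ, hκ⟩ := exists_simpleFunc_forall_apply_eq ht
  have hfst := measurePreserving_fst_fiberwiseProd κ μ
  have hsnd := measurePreserving_snd_fiberwiseProd κ μ
  refine ⟨fiberwiseProd κ μ, ⟨?_⟩, fiberwiseProd_absolutelyContinuous κ μ, fun j => ?_⟩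
  · rw [← Set.preimage_univ (f := Prod.fst), hfst.measure_preimage nullMeasurableSet_univ,
      measure_univ]
  have hfT : MemLp (f ∘ T j) 2 μ := hf.comp_measurePreserving (hT.measurePreserving j)
  obtain ⟨s, hst, hs⟩ := happrox j
  have hconst : ∀ᵐ p ∂fiberwiseProd κ μ, s p.1 = s p.2 :=
    (ae_fiberwiseProd_apply_eq κ μ).mono fun p => hκ s hst p.1 p.2
  have hle := integral_sqDist_le hfst hsnd hfT (s.memLp_of_isFiniteMeasure 2 μ) hconst
    ENNReal.ofReal_ne_top hs
  rw [ENNReal.toReal_ofReal hδ.le] at hle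
  exact ⟨integrable_sqDist hfst hsnd hfT, hle⟩

theorem IsMeasurePreservingAction.not_meanSensitiveFun_of_apFun
    (hT : IsMeasurePreservingAction T μ) (hf : MemLp f 2 μ) (hap : APFun μ T f) :
    ¬ MeanSensitiveFun μ T f := by
  rintro ⟨ε, hs⟩
  have hε : 0 < ε := hs.1
  obtain ⟨m, hm, hac, hsmall⟩ := hap.exists_integral_sqDist_le hT hf (δ := ε / 8) (by positivity)
  have hint : ∀ j, Integrable (sqDist f ∘ diagonalAction T j) m := fun j =>
    sqDist_comp_diagonalAction T f j ▸ (hsmall j).1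
  have hconv := hac.ae_le ((hT.prod hT).ae_tendsto_boxAverage_condExp
    (integrable_sqDist measurePreserving_fst measurePreserving_snd hf))
  have hcontr : ε ^ 2 / 4 ≤ (2 * (ε / 8)) ^ 2 :=
    le_of_ae_tendsto_of_integral_le (integrable_boxAverage hint)
      (fun n p => by unfold boxAverage sqDist; positivity) hconv
      (hac.ae_le (hs.ae_le_condExp hT hf))
      (integral_boxAverage_le hint (by positivity) fun j => (hsmall j).2)
  nlinarith [pow_pos hε 2]

end Sensitivity

/-- for an ergodic MPS, `H_ap^c = H_ms`: `f ∈ L²` is almost periodic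
iff it is not `μ`-mean sensitive. -/
theorem stmt1 {d : ℕ}
    [MeasurableSpace X] (μ : Measure X) [IsProbabilityMeasure μ]
    (T : (Fin d → ℤ) → X → X)
    (hT : ∀ j, MeasurePreserving (T j) μ μ)
    (hTadd : ∀ i j, T (i + j) = T i ∘ T j)
    (herg : ∀ A : Set X, MeasurableSet A → (∀ j, T j ⁻¹' A = A) → μ A = 0 ∨ μ A = 1)
    (f : X → ℂ) (hf : MemLp f 2 μ) :
    APFun μ T f ↔ ¬ MeanSensitiveFun μ T f := by
  have hS : IsMeasurePreservingAction T μ := ⟨hT, hTadd⟩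
  exact ⟨fun hap => hS.not_meanSensitiveFun_of_apFun hf hap,
    fun hns => hS.apFun_of_not_meanSensitiveFun herg hf hns⟩
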